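/- Fix ε > 0, an index i, and δ ∈ (0,1). There exists K₀ such that for all K ≥ K₀ the following holds. Set N = K(K−1) and let P be the set of ordered pairs (p,q) with p,q ∈ {1,…,K}, p ≠ q (so |P| = N). Let L be any prime with L ≥ (2N)^{N+ε} and set A = ⌊L/N^{N+ε}⌋. For ℓ ∈ (ZMod L)^P and offsets m = (m₁,…,m_A) ∈ (ZMod L)^A define T(ℓ) = {Σ_{p∈P} α_p·ℓ_p : α_p ∈ {0,…,N−1} for all p}, S(m,ℓ) = ⋃_{a=1}^A (m_a + T(ℓ)), and F_i(m,ℓ) = ⋃_{j≠i} (ℓ_{(i,j)} + S(m,ℓ)). Then there exists a choice of offsets m ∈ (ZMod L)^A such that the average over all ℓ ∈ (ZMod L)^P of |S(m,ℓ)|·(L − |F_i(m,ℓ)|)/L² is at least (1−δ)·N^{−ε}. -/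

import Mathlib

/-- The set `P` of ordered pairs `(p,q)`, `p ≠ q`, of users; `|P| = K(K−1)`. -/
abbrev PairIdx (K : ℕ) := {p : Fin K × Fin K // p.1 ≠ p.2}

/-- The generalized arithmetic progression
`T(ℓ) = {Σ_{p∈P} α_p·ℓ_p : α_p ∈ {0,…,N−1}}` in `ZMod L`. -/
def gapT (L : ℕ) [NeZero L] (K N : ℕ) (ℓ : PairIdx K → ZMod L) : Finset (ZMod L) :=
  Finset.image (fun α : PairIdx K → Fin N => ∑ p, (α p : ℕ) • ℓ p) Finset.univ

/-- The transmit set `S(m,ℓ) = ⋃_{a=1}^A (m_a + T)` obtained by interleaving `A`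
translates of `T`. -/
def sSet (L : ℕ) [NeZero L] {A : ℕ} (T : Finset (ZMod L)) (m : Fin A → ZMod L) :
    Finset (ZMod L) :=
  Finset.univ.biUnion (fun a : Fin A => T.image (fun t => m a + t))

/-- The interference set `F_i(m,ℓ) = ⋃_{j≠i} (ℓ_{(i,j)} + S(m,ℓ))` at receiver `i`. -/
def fSet (L : ℕ) [NeZero L] {K : ℕ} (i : Fin K) (ℓ : PairIdx K → ZMod L)
    (S : Finset (ZMod L)) : Finset (ZMod L) :=
  Finset.univ.biUnion (fun j : {j : Fin K // j ≠ i} =>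
    S.image (fun s => ℓ ⟨(i, j.1), Ne.symm j.2⟩ + s))

/-!
Choose the offsets uniformly at random along with the generators `ℓ`, and index the slots
`m_a + ∑ p, α_p • ℓ_p` of `S(m, ℓ)` by the pairs `(a, α)`. Two slots with different `a` coincide
with probability `1 / L`. Two slots with the same `a` coincide with probability less than `N / L`,
since an integer `d` with `0 < |d| < N` has order greater than `L / N` in `ZMod L`. With
`M = A * N ^ N` indices, the mean of `|S|` is therefore at least
`M * (1 - M / L - N ^ (N + 1) / L)`, and both subtracted terms are at most `N ^ (-ε)`. Some
choice of offsets does at least as well as the average.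

For the interference, adding a generator raises a single multiplier by one, so all the shifted
copies of `S(m, ℓ)` align inside the set built from the multipliers `0, …, N`. Hence
`|F_i| ≤ A * (N + 1) ^ N ≤ e * M`, which is a vanishing fraction of `L`.
-/

open Finset Filter Topology

section Collisions

variable {Ω α β : Type*} [DecidableEq β]

theorem card_le_card_image_add_card_collisions (s : Finset α) (f : α → β) :
    #s ≤ #(s.image f) + #{q ∈ s.offDiag | f q.1 = f q.2} := by
  classical
  rw [← card_filter_add_card_filter_not (s := s) fun x => ∀ y ∈ s, f x = f y → x = y]
  gcongr ?_ + ?_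
  · refine card_le_card_of_injOn f (fun x hx => ?_) fun x hx y hy hxy => ?_
    · exact mem_image_of_mem f (mem_filter.1 hx).1
    · exact (mem_filter.1 hx).2 y (mem_filter.1 hy).1 hxy
  · refine (card_le_card fun x hx => ?_).trans (card_image_le (f := Prod.fst))
    obtain ⟨hxs, y, hys, hxy, hne⟩ : x ∈ s ∧ ∃ y ∈ s, f x = f y ∧ x ≠ y := by simpa using hx
    exact mem_image.2 ⟨(x, y), by simp [hxs, hys, hxy, hne], rfl⟩

theorem card_mul_card_le_sum_card_image_add [Fintype Ω] (s : Finset α) (f : Ω → α → β) :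
    Fintype.card Ω * #s ≤
      ∑ ω, #(s.image (f ω)) + ∑ q ∈ s.offDiag, #{ω | f ω q.1 = f ω q.2} :=
  calc Fintype.card Ω * #s
      ≤ ∑ ω, (#(s.image (f ω)) + #{q ∈ s.offDiag | f ω q.1 = f ω q.2}) := by
        rw [← smul_eq_mul, ← card_univ]
        exact card_nsmul_le_sum _ _ _ fun ω _ => card_le_card_image_add_card_collisions s (f ω)
    _ = _ := by
        rw [sum_add_distrib]
        congr 1
        exact sum_card_bipartiteAbove_eq_sum_card_bipartiteBelow
          fun ω (q : α × α) => f ω q.1 = f ω q.2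

end Collisions

theorem card_eq_mul_addOrderOf_le {G H : Type*} [AddGroup G] [AddCommGroup H] [Fintype G]
    [DecidableEq H] (φ ψ : G →+ H) (v : G) :
    #{g | φ g = ψ g} * addOrderOf (φ v - ψ v) ≤ Fintype.card G := by
  have h_ker : #{g | φ g = ψ g} = Nat.card (φ - ψ).ker := by
    rw [← Fintype.card_subtype, ← Nat.card_eq_fintype_card]
    simp only [← sub_eq_zero (a := φ _)]
    rfl
  have h_order : addOrderOf (φ v - ψ v) ≤ Nat.card (φ - ψ).range := by
    rw [← AddMonoidHom.sub_apply, ← Nat.card_zmultiples]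
    exact AddSubgroup.card_le_of_le (AddSubgroup.zmultiples_le_of_mem ⟨v, rfl⟩)
  rw [h_ker, ← Nat.card_eq_fintype_card, ← (φ - ψ).ker.card_mul_index, AddSubgroup.index_ker]
  gcongr

theorem le_natAbs_mul_addOrderOf_intCast (L : ℕ) [NeZero L] {d : ℤ} (hd : d ≠ 0) :
    L ≤ d.natAbs * addOrderOf (d : ZMod L) := by
  refine Nat.le_of_dvd (Nat.mul_pos (Int.natAbs_pos.2 hd) (addOrderOf_pos _)) ?_
  have h_zero : ((d * addOrderOf (d : ZMod L) : ℤ) : ZMod L) = 0 := by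
    have := addOrderOf_nsmul_eq_zero (d : ZMod L)
    rw [nsmul_eq_mul] at this
    push_cast
    rw [mul_comm, this]
  simpa [Int.natAbs_mul] using
    Int.natCast_dvd.1 ((ZMod.intCast_zmod_eq_zero_iff_dvd _ L).1 h_zero)

section Slots

variable {κ ι : Type*} [Fintype ι] {N : ℕ}

/-- The slot `m_a + ∑ p, α_p • ℓ_p` with index `(a, α)`, as a homomorphism in the pair `(m, ℓ)` of
offsets and generators. -/
def slotHom {G : Type*} [AddCommGroup G] (x : κ × (ι → Fin N)) : (κ → G) × (ι → G) →+ G :=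
  (Pi.evalAddMonoidHom (fun _ => G) x.1).comp (AddMonoidHom.fst _ _) +
    ∑ p, (x.2 p : ℕ) • (Pi.evalAddMonoidHom (fun _ => G) p).comp (AddMonoidHom.snd _ _)

theorem slotHom_apply {G : Type*} [AddCommGroup G] (x : κ × (ι → Fin N)) (m : κ → G)
    (ℓ : ι → G) : slotHom x (m, ℓ) = m x.1 + ∑ p, (x.2 p : ℕ) • ℓ p := by
  simp [slotHom]

variable {L : ℕ} [NeZero L] [Fintype κ] [DecidableEq ι]

theorem card_slotHom_eq_mul_le [DecidableEq κ] {x y : κ × (ι → Fin N)} (hxy : x ≠ y) :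
    #{ω : (κ → ZMod L) × (ι → ZMod L) | slotHom x ω = slotHom y ω} * L ≤
      (if x.1 = y.1 then N else 1) * Fintype.card ((κ → ZMod L) × (ι → ZMod L)) := by
  split_ifs with h
  · obtain ⟨p, hp⟩ : ∃ p, x.2 p ≠ y.2 p :=
      Function.ne_iff.1 fun h' => hxy (Prod.ext h h')
    set d : ℤ := (x.2 p : ℤ) - (y.2 p : ℤ) with hd
    have hdN : d.natAbs ≤ N := by omega
    have hd_ne : d ≠ 0 := by omega
    have h_diff : slotHom x (0, Pi.single p 1) - slotHom y (0, Pi.single p 1) = (d : ZMod L) := by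
      simp [slotHom_apply, Pi.single_apply, hd]
    have h_card := card_eq_mul_addOrderOf_le (slotHom (G := ZMod L) x) (slotHom y)
      (0, Pi.single p 1)
    rw [h_diff] at h_card
    calc _ ≤ _ * (N * addOrderOf (d : ZMod L)) := by
          gcongr
          exact (le_natAbs_mul_addOrderOf_intCast L hd_ne).trans (by gcongr)
      _ = N * (_ * addOrderOf (d : ZMod L)) := by ring
      _ ≤ _ := by gcongr
  · have h_diff : slotHom x (Pi.single x.1 1, 0) - slotHom y (Pi.single x.1 1, 0) =
        (1 : ZMod L) := by
      simp [slotHom_apply, Ne.symm h]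
    have h_card := card_eq_mul_addOrderOf_le (slotHom (G := ZMod L) x) (slotHom y)
      (Pi.single x.1 1, 0)
    rwa [h_diff, ZMod.addOrderOf_one, ← one_mul (Fintype.card _)] at h_card

theorem sum_card_slotHom_eq_mul_le [DecidableEq κ] :
    (∑ q ∈ (univ : Finset (κ × (ι → Fin N))).offDiag,
        #{ω : (κ → ZMod L) × (ι → ZMod L) | slotHom q.1 ω = slotHom q.2 ω}) * L ≤
      ((Fintype.card κ * N ^ Fintype.card ι) ^ 2 +
          Fintype.card κ * N ^ Fintype.card ι * N ^ (Fintype.card ι + 1)) *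
        Fintype.card ((κ → ZMod L) × (ι → ZMod L)) := by
  have h_weights : ∑ q : (κ × (ι → Fin N)) × (κ × (ι → Fin N)),
      (if q.1.1 = q.2.1 then N else 1) ≤ (Fintype.card κ * N ^ Fintype.card ι) ^ 2 +
        Fintype.card κ * N ^ Fintype.card ι * N ^ (Fintype.card ι + 1) :=
    calc _ ≤ ∑ q : (κ × (ι → Fin N)) × (κ × (ι → Fin N)),
          (1 + if q.1.1 = q.2.1 then N else 0) := by
          gcongr with q
          split_ifs <;> omega
      _ = ∑ a : κ, ∑ _α : ι → Fin N, ∑ b : κ, ∑ _β : ι → Fin N,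
          (1 + if a = b then N else 0) := by
          simp only [Fintype.sum_prod_type]
      _ = _ := by
          simp only [sum_const, card_univ, Fintype.card_pi, Fintype.card_fin, prod_const,
            smul_eq_mul, mul_add, mul_one, mul_ite, mul_zero, sum_add_distrib, sum_ite_eq,
            mem_univ, if_true]
          ring
  rw [sum_mul]
  refine (sum_le_sum fun q hq => card_slotHom_eq_mul_le (mem_offDiag.1 hq).2.2).trans ?_
  rw [← sum_mul]
  gcongr
  exact (sum_le_sum_of_subset (subset_univ _)).trans h_weights

theorem exists_le_sum_card_image_slotHom :
    ∃ m : κ → ZMod L,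
      L ^ Fintype.card ι * (Fintype.card κ * N ^ Fintype.card ι * L) ≤
        (∑ ℓ : ι → ZMod L, #(univ.image fun x : κ × (ι → Fin N) => slotHom x (m, ℓ))) * L +
          L ^ Fintype.card ι * ((Fintype.card κ * N ^ Fintype.card ι) ^ 2 +
            Fintype.card κ * N ^ Fintype.card ι * N ^ (Fintype.card ι + 1)) := by
  classical
  have h_count := card_mul_card_le_sum_card_image_add (univ : Finset (κ × (ι → Fin N)))
    fun (ω : (κ → ZMod L) × (ι → ZMod L)) x => slotHom x ω
  have h_coll := sum_card_slotHom_eq_mul_le (κ := κ) (ι := ι) (N := N) (L := L)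
  set M := Fintype.card κ * N ^ Fintype.card ι
  have h_avg : ∑ _m : κ → ZMod L, L ^ Fintype.card ι * (M * L) ≤
      ∑ m : κ → ZMod L, ((∑ ℓ : ι → ZMod L,
        #(univ.image fun x : κ × (ι → Fin N) => slotHom x (m, ℓ))) * L +
          L ^ Fintype.card ι * (M ^ 2 + M * N ^ (Fintype.card ι + 1))) :=
    calc _ = Fintype.card ((κ → ZMod L) × (ι → ZMod L)) *
            #(univ : Finset (κ × (ι → Fin N))) * L := by
          simp only [M, sum_const, card_univ, Fintype.card_pi, Fintype.card_prod, ZMod.card,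
            Fintype.card_fin, prod_const, smul_eq_mul]
          ring
      _ ≤ _ := Nat.mul_le_mul_right L h_count
      _ ≤ _ := (add_mul _ _ _).trans_le (Nat.add_le_add_left h_coll _)
      _ = _ := by
          simp only [Fintype.sum_prod_type, sum_add_distrib, sum_mul, sum_const, card_univ,
            Fintype.card_pi, Fintype.card_prod, ZMod.card, prod_const, smul_eq_mul]
          ring
  obtain ⟨m, -, hm⟩ := exists_le_of_sum_le univ_nonempty h_avg
  exact ⟨m, hm⟩

end Slots

theorem add_one_pow_self_le (N : ℕ) : ((N : ℝ) + 1) ^ N ≤ Real.exp 1 * (N : ℝ) ^ N := by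
  rcases N.eq_zero_or_pos with rfl | hN
  · simp
  have hN' : (0 : ℝ) < N := by exact_mod_cast hN
  calc ((N : ℝ) + 1) ^ N = (1 / (N : ℝ) + 1) ^ N * (N : ℝ) ^ N := by
        rw [← mul_pow, add_mul, one_div_mul_cancel hN'.ne', one_mul, add_comm]
    _ ≤ Real.exp (1 / N) ^ N * (N : ℝ) ^ N := by
        gcongr
        exact Real.add_one_le_exp _
    _ = Real.exp 1 * (N : ℝ) ^ N := by
        rw [← Real.exp_nat_mul, mul_one_div_cancel hN'.ne']

theorem one_sub_one_div_mul_le_floor {N q : ℝ} (hN : 0 < N) (hNq : N ≤ q) :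
    (1 - 1 / N) * q ≤ ⌊q⌋₊ := by
  have h_one : 1 ≤ 1 / N * q := by rwa [one_div_mul_eq_div, one_le_div hN]
  linarith [Nat.lt_floor_add_one q]

theorem div_rpow_add_mul_pow {N : ℕ} (hN : 0 < N) (ε L : ℝ) :
    L / (N : ℝ) ^ ((N : ℝ) + ε) * (N : ℝ) ^ N = L * (N : ℝ) ^ (-ε) := by
  have hN' : (0 : ℝ) < N := by exact_mod_cast hN
  rw [Real.rpow_add hN', Real.rpow_natCast, Real.rpow_neg hN'.le]
  have := (Real.rpow_pos_of_pos hN' ε).ne'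
  field_simp

theorem floor_mul_pow_bounds {N L : ℕ} (hN : 0 < N) {ε : ℝ}
    (hL : (N : ℝ) ^ ((N : ℝ) + 1 + ε) ≤ L) :
    (1 - 1 / (N : ℝ)) * (L * (N : ℝ) ^ (-ε)) ≤
        ⌊(L : ℝ) / (N : ℝ) ^ ((N : ℝ) + ε)⌋₊ * (N : ℝ) ^ N ∧
      ⌊(L : ℝ) / (N : ℝ) ^ ((N : ℝ) + ε)⌋₊ * (N : ℝ) ^ N ≤ L * (N : ℝ) ^ (-ε) ∧
      (N : ℝ) ^ (N + 1) ≤ L * (N : ℝ) ^ (-ε) := by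
  have hN' : (0 : ℝ) < N := by exact_mod_cast hN
  have h_quot : (N : ℝ) ≤ L / (N : ℝ) ^ ((N : ℝ) + ε) := by
    rwa [le_div_iff₀ (by positivity), mul_comm, ← Real.rpow_add_one hN'.ne', add_right_comm]
  simp only [← div_rpow_add_mul_pow hN]
  refine ⟨?_, ?_, ?_⟩
  · rw [← mul_assoc]
    gcongr
    exact one_sub_one_div_mul_le_floor hN' h_quot
  · gcongr
    exact Nat.floor_le (by positivity)
  · rw [pow_succ']
    gcongr

theorem rpow_add_one_add_le_two_mul_rpow (N : ℕ) {ε : ℝ} (hε : 0 ≤ ε) :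
    (N : ℝ) ^ ((N : ℝ) + 1 + ε) ≤ ((2 * N : ℕ) : ℝ) ^ ((N : ℝ) + ε) := by
  rcases N.eq_zero_or_pos with rfl | hN
  · rw [Nat.cast_zero, Real.zero_rpow (by linarith)]
    positivity
  have hN' : (0 : ℝ) < N := by exact_mod_cast hN
  have h_two : (N : ℝ) ≤ 2 ^ ((N : ℝ) + ε) :=
    calc (N : ℝ) ≤ 2 ^ N := by exact_mod_cast Nat.lt_two_pow_self.le
      _ = 2 ^ (N : ℝ) := (Real.rpow_natCast _ _).symm
      _ ≤ _ := Real.rpow_le_rpow_of_exponent_le one_le_two (by linarith)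
  calc (N : ℝ) ^ ((N : ℝ) + 1 + ε) = N * (N : ℝ) ^ ((N : ℝ) + ε) := by
        rw [add_right_comm, Real.rpow_add_one' hN'.le (by positivity), mul_comm]
    _ ≤ 2 ^ ((N : ℝ) + ε) * (N : ℝ) ^ ((N : ℝ) + ε) := by gcongr
    _ = _ := by rw [← Real.mul_rpow two_pos.le hN'.le, Nat.cast_mul, Nat.cast_two]

theorem eventually_one_sub_le_loss_factor {ε δ : ℝ} (hε : 0 < ε) (hδ : 0 < δ) (c : ℝ) :
    ∀ᶠ N : ℕ in atTop, c * (N : ℝ) ^ (-ε) ≤ 1 ∧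
      1 - δ ≤ (1 - 1 / (N : ℝ)) * (1 - 2 * (N : ℝ) ^ (-ε)) * (1 - c * (N : ℝ) ^ (-ε)) := by
  have h_rpow : Tendsto (fun N : ℕ => (N : ℝ) ^ (-ε)) atTop (𝓝 0) :=
    (tendsto_rpow_neg_atTop hε).comp tendsto_natCast_atTop_atTop
  have h_one_sub {f : ℕ → ℝ} {a : ℝ} (hf : Tendsto f atTop (𝓝 a)) :
      Tendsto (fun N => 1 - f N) atTop (𝓝 (1 - a)) := hf.const_sub 1
  have h_prod := ((h_one_sub tendsto_one_div_atTop_nhds_zero_nat).mul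
    (h_one_sub (h_rpow.const_mul 2))).mul (h_one_sub (h_rpow.const_mul c))
  have h_limit : 1 - δ < (1 - 0) * (1 - 2 * 0) * (1 - c * 0) := by linarith
  exact ((h_rpow.const_mul c).eventually_le_const (by simp)).and
    (h_prod.eventually_const_le h_limit)

theorem mul_sum_le_sum_mul_sub_div {Λ : Type*} [Fintype Λ] {s f : Λ → ℝ} {B L : ℝ}
    (hs : ∀ ℓ, 0 ≤ s ℓ) (hf : ∀ ℓ, f ℓ ≤ B) :
    (∑ ℓ, s ℓ) * ((L - B) / L ^ 2) ≤ ∑ ℓ, s ℓ * (L - f ℓ) / L ^ 2 := by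
  rw [sum_mul]
  gcongr with ℓ
  rw [mul_div_assoc]
  gcongr
  exacts [hs ℓ, hf ℓ]

section Alignment

variable (L : ℕ) [NeZero L] {A K N : ℕ}

theorem sSet_gapT (m : Fin A → ZMod L) (ℓ : PairIdx K → ZMod L) :
    sSet L (gapT L K N ℓ) m =
      univ.image fun x : Fin A × (PairIdx K → Fin N) => slotHom x (m, ℓ) := by
  ext z
  simp [sSet, gapT, slotHom_apply, eq_neg_add_iff_add_eq]

theorem add_mem_gapT_succ {ℓ : PairIdx K → ZMod L} {t : ZMod L} (ht : t ∈ gapT L K N ℓ)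
    (q : PairIdx K) : ℓ q + t ∈ gapT L K (N + 1) ℓ := by
  obtain ⟨α, -, rfl⟩ := mem_image.1 ht
  have h_lt (p : PairIdx K) : (α p : ℕ) + (if p = q then 1 else 0) < N + 1 := by
    split_ifs <;> omega
  refine mem_image.2 ⟨fun p => ⟨α p + if p = q then 1 else 0, h_lt p⟩, mem_univ _, ?_⟩
  simp [add_mul, sum_add_distrib, add_comm]

theorem fSet_sSet_gapT_subset (i : Fin K) (m : Fin A → ZMod L) (ℓ : PairIdx K → ZMod L) :
    fSet L i ℓ (sSet L (gapT L K N ℓ) m) ⊆ sSet L (gapT L K (N + 1) ℓ) m := by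
  intro z hz
  simp only [fSet, sSet, mem_biUnion, mem_image, mem_univ, true_and] at hz ⊢
  obtain ⟨j, _, ⟨a, t, ht, rfl⟩, rfl⟩ := hz
  exact ⟨a, _, add_mem_gapT_succ L ht ⟨(i, j.1), Ne.symm j.2⟩, add_left_comm _ _ _⟩

theorem card_pairIdx (K : ℕ) : Fintype.card (PairIdx K) = K * (K - 1) := by
  have h_offDiag := offDiag_card (univ : Finset (Fin K))
  rw [card_fin] at h_offDiag
  rw [Nat.mul_sub_one, ← h_offDiag, Fintype.card_subtype]
  congr 1
  ext p
  simp

theorem card_fSet_sSet_gapT_le (i : Fin K) (m : Fin A → ZMod L) (ℓ : PairIdx K → ZMod L) :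
    #(fSet L i ℓ (sSet L (gapT L K N ℓ) m)) ≤ A * (N + 1) ^ (K * (K - 1)) :=
  calc _ ≤ #(sSet L (gapT L K (N + 1) ℓ) m) := card_le_card (fSet_sSet_gapT_subset L i m ℓ)
    _ ≤ Fintype.card (Fin A × (PairIdx K → Fin (N + 1))) := by
        rw [sSet_gapT]
        exact card_image_le
    _ = A * (N + 1) ^ (K * (K - 1)) := by simp [← card_pairIdx]

theorem card_fSet_sSet_gapT_le_exp (i : Fin K) (m : Fin A → ZMod L) (ℓ : PairIdx K → ZMod L) :
    (#(fSet L i ℓ (sSet L (gapT L K (K * (K - 1)) ℓ) m)) : ℝ) ≤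
      Real.exp 1 * (A * ((K * (K - 1) : ℕ) : ℝ) ^ (K * (K - 1))) :=
  calc _ ≤ (A : ℝ) * (((K * (K - 1) : ℕ) : ℝ) + 1) ^ (K * (K - 1)) := by
        exact_mod_cast card_fSet_sSet_gapT_le L i m ℓ
    _ ≤ A * (Real.exp 1 * ((K * (K - 1) : ℕ) : ℝ) ^ (K * (K - 1))) := by
        gcongr
        exact add_one_pow_self_le _
    _ = _ := mul_left_comm _ _ _

theorem exists_le_sum_card_sSet_gapT (A K N : ℕ) :
    ∃ m : Fin A → ZMod L,
      (L : ℝ) ^ (K * (K - 1)) * (A * N ^ (K * (K - 1)) *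
          (1 - A * N ^ (K * (K - 1)) / L - N ^ (K * (K - 1) + 1) / L)) ≤
        ∑ ℓ : PairIdx K → ZMod L, (#(sSet L (gapT L K N ℓ) m) : ℝ) := by
  obtain ⟨m, hm⟩ := exists_le_sum_card_image_slotHom (κ := Fin A) (ι := PairIdx K)
    (N := N) (L := L)
  simp only [card_pairIdx, Fintype.card_fin, ← sSet_gapT] at hm
  have hL : (0 : ℝ) < L := by exact_mod_cast NeZero.pos L
  have hm' := (Nat.cast_le (α := ℝ)).2 hm
  push_cast at hm'
  refine ⟨m, le_of_mul_le_mul_right ?_ hL⟩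
  calc _ = (L : ℝ) ^ (K * (K - 1)) * (A * N ^ (K * (K - 1)) * L) -
        L ^ (K * (K - 1)) * ((A * N ^ (K * (K - 1))) ^ 2 +
          A * N ^ (K * (K - 1)) * N ^ (K * (K - 1) + 1)) := by
        field_simp
        ring
    _ ≤ _ := sub_le_iff_le_add.2 hm'

end Alignment

/-- The average over all `ℓ` of `|S(m,ℓ)|·(L − |F_i(m,ℓ)|)/L²` with `N = K(K−1)`: the expected
fraction of slots at receiver `i` that carry data and no interference. -/
noncomputable def cleanSlotAverage {A K L : ℕ} [NeZero L] (i : Fin K) (m : Fin A → ZMod L) : ℝ :=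
  (∑ ℓ : PairIdx K → ZMod L,
      (#(sSet L (gapT L K (K * (K - 1)) ℓ) m) : ℝ) *
        (L - (#(fSet L i ℓ (sSet L (gapT L K (K * (K - 1)) ℓ) m)) : ℝ)) / (L : ℝ) ^ 2) /
    (L : ℝ) ^ (K * (K - 1))

theorem exists_le_cleanSlotAverage {A K L : ℕ} [NeZero L] (i : Fin K) {b x : ℝ}
    (h_lower : b * (L * x) ≤ A * ((K * (K - 1) : ℕ) : ℝ) ^ (K * (K - 1)))
    (h_upper : A * ((K * (K - 1) : ℕ) : ℝ) ^ (K * (K - 1)) ≤ L * x)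
    (h_pow : ((K * (K - 1) : ℕ) : ℝ) ^ (K * (K - 1) + 1) ≤ L * x)
    (hx : Real.exp 1 * x ≤ 1) :
    ∃ m : Fin A → ZMod L,
      b * (1 - 2 * x) * (1 - Real.exp 1 * x) * x ≤ cleanSlotAverage i m := by
  obtain ⟨m, hm⟩ := exists_le_sum_card_sSet_gapT L A K (K * (K - 1))
  refine ⟨m, ?_⟩
  have h_interference (ℓ : PairIdx K → ZMod L) :=
    (card_fSet_sSet_gapT_le_exp L i m ℓ).trans
      (mul_le_mul_of_nonneg_left h_upper (Real.exp_pos 1).le)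
  rw [cleanSlotAverage]
  generalize K * (K - 1) = N at *
  have hL : (0 : ℝ) < L := by exact_mod_cast NeZero.pos L
  set M : ℝ := A * (N : ℝ) ^ N
  have hM : 0 ≤ M := by positivity
  have hx_half : 2 * x ≤ 1 := by
    have hx_nonneg : 0 ≤ x := nonneg_of_mul_nonneg_right (hM.trans h_upper) hL
    exact (mul_le_mul_of_nonneg_right (by linarith [Real.add_one_le_exp 1]) hx_nonneg).trans hx
  have h_collisions : 1 - 2 * x ≤ 1 - M / L - (N : ℝ) ^ (N + 1) / L := by
    linarith [(div_le_iff₀' hL).2 h_upper, (div_le_iff₀' hL).2 h_pow]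
  have h_data : b * (L * x) * (1 - 2 * x) ≤ M * (1 - M / L - (N : ℝ) ^ (N + 1) / L) := by
    gcongr
  rw [le_div_iff₀ (by positivity)]
  calc b * (1 - 2 * x) * (1 - Real.exp 1 * x) * x * (L : ℝ) ^ N
      = (L : ℝ) ^ N * (b * (L * x) * (1 - 2 * x)) * ((L - Real.exp 1 * (L * x)) / L ^ 2) := by
        field_simp
    _ ≤ (∑ ℓ, (#(sSet L (gapT L K N ℓ) m) : ℝ)) * ((L - Real.exp 1 * (L * x)) / L ^ 2) := by
        have h_free : 0 ≤ (L : ℝ) - Real.exp 1 * (L * x) := by nlinarith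
        gcongr
        exact (mul_le_mul_of_nonneg_left h_data (by positivity)).trans hm
    _ ≤ _ := mul_sum_le_sum_mul_sub_div (fun ℓ => Nat.cast_nonneg _) h_interference

theorem exists_good_offsets_general (ε δ : ℝ) (hε : 0 < ε) (hδ : 0 < δ) :
    ∃ K₀ : ℕ, ∀ K : ℕ, K₀ ≤ K → ∀ i : Fin K, ∀ (L : ℕ) [NeZero L],
      ((K * (K - 1) : ℕ) : ℝ) ^ (((K * (K - 1) : ℕ) : ℝ) + 1 + ε) ≤ (L : ℝ) →
        ∃ m : Fin ⌊(L : ℝ) /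
            ((K * (K - 1) : ℕ) : ℝ) ^ (((K * (K - 1) : ℕ) : ℝ) + ε)⌋₊ → ZMod L,
          (1 - δ) * ((K * (K - 1) : ℕ) : ℝ) ^ (-ε) ≤ cleanSlotAverage i m := by
  have h_tendsto : Tendsto (fun K : ℕ => K * (K - 1)) atTop atTop :=
    tendsto_id.atTop_mul_atTop₀ (tendsto_sub_atTop_nat 1)
  obtain ⟨K₀, hK₀⟩ := eventually_atTop.1 <|
    (h_tendsto.eventually (eventually_one_sub_le_loss_factor hε hδ (Real.exp 1))).and
      (h_tendsto.eventually_gt_atTop 0)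
  refine ⟨K₀, fun K hK i L _ hL => ?_⟩
  obtain ⟨⟨hx, h_loss⟩, hN⟩ := hK₀ K hK
  obtain ⟨h_lower, h_upper, h_pow⟩ := floor_mul_pow_bounds hN hL
  obtain ⟨m, hm⟩ := exists_le_cleanSlotAverage i h_lower h_upper h_pow hx
  exact ⟨m, (mul_le_mul_of_nonneg_right h_loss (by positivity)).trans hm⟩

/-- Theorem 1 of the paper (achievability core).  Fix `ε > 0` and `δ ∈ (0,1)`.  For
all sufficiently large `K`, every user index `i`, every prime `L ≥ (2N)^{N+ε}` where
`N = K(K−1)`, and `A = ⌊L/N^{N+ε}⌋`, there is a choice of offsets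
`m ∈ (ZMod L)^A` such that the average over all `ℓ ∈ (ZMod L)^P` of
`|S(m,ℓ)|·(L − |F_i(m,ℓ)|)/L²` — the expected fraction of interference-free data
slots — is at least `(1−δ)·N^{−ε}`. -/
theorem exists_good_offsets (ε δ : ℝ) (hε : 0 < ε) (hδ0 : 0 < δ) (hδ1 : δ < 1) :
    ∃ K₀ : ℕ, ∀ K : ℕ, K₀ ≤ K → ∀ i : Fin K,
      ∀ (L : ℕ) [NeZero L], Nat.Prime L →
        ((2 * (K * (K - 1)) : ℕ) : ℝ) ^ (((K * (K - 1) : ℕ) : ℝ) + ε) ≤ (L : ℝ) →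
        ∃ m : Fin (Nat.floor ((L : ℝ) /
              ((K * (K - 1) : ℕ) : ℝ) ^ (((K * (K - 1) : ℕ) : ℝ) + ε))) → ZMod L,
          (1 - δ) * ((K * (K - 1) : ℕ) : ℝ) ^ (-ε) ≤
            (∑ ℓ : PairIdx K → ZMod L,
                ((sSet L (gapT L K (K * (K - 1)) ℓ) m).card : ℝ) *
                  ((L : ℝ) -
                    ((fSet L i ℓ (sSet L (gapT L K (K * (K - 1)) ℓ) m)).card : ℝ))
                  / (L : ℝ) ^ 2)
              / (L : ℝ) ^ (K * (K - 1)) := by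
  obtain ⟨K₀, hK₀⟩ := exists_good_offsets_general ε δ hε hδ0
  exact ⟨K₀, fun K hK i L _ _ hL =>
    hK₀ K hK i L ((rpow_add_one_add_le_two_mul_rpow _ hε.le).trans hL)⟩
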